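/- Let G be a cubical abelian group with connections. Then (G being Kan, so that its homotopy groups are defined) for every n ≥ 0 there is a natural isomorphism of groups π_n(G) ≅ H_n(N(G)), where N(G) is the normalized chain complex of G. -/

import Mathlib

universe u

section
variable (G : ℕ → Type u) [∀ n, AddCommGroup (G n)]
  (d : ∀ n : ℕ, ℕ → Bool → (G (n + 1) →+ G n))

/-- `N_n(G)`: the intersection of the kernels of the faces `∂_i^1`. -/
def NSubA : ∀ n, AddSubgroup (G n)
  | 0 => ⊤
  | (n + 1) => ⨅ i ∈ Finset.Icc 1 (n + 1), (d n i true).ker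

/-- The differential `Σ_{i=1}^{n+1} (-1)^{i+1} ∂_i^0 : G_{n+1} →+ G_n` of `N(G)`. -/
def deltaA (n : ℕ) : G (n + 1) →+ G n :=
  ∑ i ∈ Finset.Icc 1 (n + 1), ((-1 : ℤ) ^ (i + 1)) • d n i false

/-- The cycles `Z_n` of `N(G)`. -/
def ZSubA : ∀ n, AddSubgroup (G n)
  | 0 => ⊤
  | (n + 1) => NSubA G d (n + 1) ⊓ (deltaA G d n).ker

/-- The boundaries `B_n` of `N(G)`: the image of `N_{n+1}(G)` under the differential. -/
def BSubA (n : ℕ) : AddSubgroup (G n) :=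
  (NSubA G d (n + 1)).map (deltaA G d n)

/-- `\tilde G_n`: the `n`-cubes all of whose faces vanish. -/
def TildeA : ∀ n, AddSubgroup (G n)
  | 0 => ⊤
  | (n + 1) => ⨅ j ∈ Finset.Icc 1 (n + 1), ((d n j false).ker ⊓ (d n j true).ker)

/-- The homotopy relation on `\tilde G_n`. -/
def RelA (n : ℕ) (x y : G n) : Prop :=
  ∃ z : G (n + 1), d n 1 false z = x ∧ d n 1 true z = y ∧
    ∀ (j : ℕ) (ε : Bool), 2 ≤ j → j ≤ n + 1 → d n j ε z = 0

end

theorem mem_NSubA_succ {G : ℕ → Type u} [∀ n, AddCommGroup (G n)]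
    {d : ∀ n : ℕ, ℕ → Bool → (G (n + 1) →+ G n)} {n : ℕ} {x : G (n + 1)} :
    x ∈ NSubA G d (n + 1) ↔ ∀ i, 1 ≤ i → i ≤ n + 1 → d n i true x = 0 := by
  simp [NSubA, AddSubgroup.mem_iInf]

theorem mem_TildeA_succ {G : ℕ → Type u} [∀ n, AddCommGroup (G n)]
    {d : ∀ n : ℕ, ℕ → Bool → (G (n + 1) →+ G n)} {n : ℕ} {x : G (n + 1)} :
    x ∈ TildeA G d (n + 1) ↔ ∀ i, 1 ≤ i → i ≤ n + 1 → ∀ ε, d n i ε x = 0 := by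
  simp [TildeA, AddSubgroup.mem_iInf, AddSubgroup.mem_inf]

theorem deltaA_apply' {G : ℕ → Type u} [∀ n, AddCommGroup (G n)]
    {d : ∀ n : ℕ, ℕ → Bool → (G (n + 1) →+ G n)} (n : ℕ) (x : G (n + 1)) :
    deltaA G d n x = ∑ i ∈ Finset.Icc 1 (n + 1), ((-1 : ℤ) ^ (i + 1)) • d n i false x := by
  simp [deltaA]

/-- The differential only sees the possibly nonzero faces. -/
theorem deltaA_trunc {G : ℕ → Type u} [∀ n, AddCommGroup (G n)]
    {d : ∀ n : ℕ, ℕ → Bool → (G (n + 1) →+ G n)} (n k : ℕ) (hk : k ≤ n + 1) (x : G (n + 1))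
    (hx : ∀ i, k < i → i ≤ n + 1 → d n i false x = 0) :
    deltaA G d n x = ∑ i ∈ Finset.Icc 1 k, ((-1 : ℤ) ^ (i + 1)) • d n i false x := by
  rw [deltaA_apply']
  symm
  apply Finset.sum_subset
  · intro i hi
    simp only [Finset.mem_Icc] at hi ⊢
    omega
  · intro i hi hi'
    simp only [Finset.mem_Icc] at hi hi'
    rw [hx i (by omega) (by omega), smul_zero]

theorem deltaA_one {G : ℕ → Type u} [∀ n, AddCommGroup (G n)]
    {d : ∀ n : ℕ, ℕ → Bool → (G (n + 1) →+ G n)} (n : ℕ) (x : G (n + 1))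
    (hx : ∀ i, 1 < i → i ≤ n + 1 → d n i false x = 0) :
    deltaA G d n x = d n 1 false x := by
  rw [deltaA_trunc n 1 (by omega) x hx]
  simp

/-- `δ ∘ δ = 0`. -/
theorem deltaA_deltaA {G : ℕ → Type u} [∀ n, AddCommGroup (G n)]
    {d : ∀ n : ℕ, ℕ → Bool → (G (n + 1) →+ G n)}
    (hdd : ∀ (n i j : ℕ) (α ε : Bool), 1 ≤ i → i < j → j ≤ n + 2 →
      ∀ x, d n i α (d (n + 1) j ε x) = d n (j - 1) ε (d (n + 1) i α x))
    (n : ℕ) (x : G (n + 2)) : deltaA G d n (deltaA G d (n + 1) x) = 0 := by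
  have e : deltaA G d n (deltaA G d (n + 1) x) =
      ∑ p ∈ Finset.Icc 1 (n + 1) ×ˢ Finset.Icc 1 (n + 2),
        ((-1 : ℤ) ^ (p.1 + p.2)) • d n p.1 false (d (n + 1) p.2 false x) := by
    rw [Finset.sum_product, deltaA_apply', deltaA_apply']
    refine Finset.sum_congr rfl fun i _ => ?_
    rw [map_sum, Finset.smul_sum]
    refine Finset.sum_congr rfl fun j _ => ?_
    rw [map_zsmul, smul_smul]
    congr 1
    ring
  rw [e]
  refine Finset.sum_involution
    (fun p _ => if p.1 < p.2 then (p.2 - 1, p.1) else (p.2, p.1 + 1)) ?_ ?_ ?_ ?_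
  · rintro ⟨i, j⟩ hp
    simp only [Finset.mem_product, Finset.mem_Icc] at hp
    by_cases h : i < j
    · simp only [h, if_true]
      rw [hdd n i j false false (by omega) h (by omega)]
      obtain ⟨j, rfl⟩ : ∃ j', j = j' + 1 := ⟨j - 1, by omega⟩
      rw [Nat.add_sub_cancel, ← add_smul]
      have : (-1 : ℤ) ^ (i + (j + 1)) + (-1) ^ (j + i) = 0 := by ring
      rw [this, zero_smul]
    · simp only [h, if_false]
      rw [hdd n j (i + 1) false false (by omega) (by omega) (by omega)]
      rw [Nat.add_sub_cancel, ← add_smul]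
      have : (-1 : ℤ) ^ (i + j) + (-1) ^ (j + (i + 1)) = 0 := by ring
      rw [this, zero_smul]
  · rintro ⟨i, j⟩ hp _ h
    split_ifs at h <;> simp only [Prod.mk.injEq] at h <;> simp only [] at * <;> omega
  · rintro ⟨i, j⟩ hp
    simp only [Finset.mem_product, Finset.mem_Icc] at hp
    split_ifs <;> simp only [Finset.mem_product, Finset.mem_Icc] <;> simp only [] at * <;> omega
  · rintro ⟨i, j⟩ hp
    simp only [Finset.mem_product, Finset.mem_Icc] at hp
    by_cases h : i < j
    · have h2 : ¬ (j - 1 < i) := by omega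
      simp only [h, if_true, h2, if_false, Prod.mk.injEq, true_and]
      omega
    · have h2 : j < i + 1 := by omega
      simp only [h, if_false, h2, if_true, Nat.add_sub_cancel]

/-- Connections preserve `N`. -/
theorem conn_mem {G : ℕ → Type u} [∀ n, AddCommGroup (G n)]
    {d : ∀ n : ℕ, ℕ → Bool → (G (n + 1) →+ G n)}
    {s : ∀ n : ℕ, ℕ → (G n →+ G (n + 1))}
    {Γ : ∀ n : ℕ, ℕ → (G (n + 1) →+ G (n + 2))}
    (hdc_lt : ∀ (n i j : ℕ) (α : Bool), 1 ≤ i → i < j → j ≤ n + 2 →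
      ∀ x, d (n + 2) i α (Γ (n + 1) j x) = Γ n (j - 1) (d (n + 1) i α x))
    (hdc_eq_zero : ∀ (n j : ℕ), 1 ≤ j → j ≤ n + 1 →
      ∀ x, d (n + 1) j false (Γ n j x) = x ∧ d (n + 1) (j + 1) false (Γ n j x) = x)
    (hdc_eq_one : ∀ (n j : ℕ), 1 ≤ j → j ≤ n + 1 →
      ∀ x, d (n + 1) j true (Γ n j x) = s n j (d n j true x) ∧
        d (n + 1) (j + 1) true (Γ n j x) = s n j (d n j true x))
    (hdc_gt : ∀ (n i j : ℕ) (α : Bool), 1 ≤ j → j + 1 < i → i ≤ n + 3 →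
      ∀ x, d (n + 2) i α (Γ (n + 1) j x) = Γ n j (d (n + 1) (i - 1) α x))
    (m l : ℕ) (hl : 1 ≤ l) (hl' : l ≤ m + 1) (y : G (m + 1)) (hy : y ∈ NSubA G d (m + 1)) :
    Γ m l y ∈ NSubA G d (m + 2) := by
  rw [mem_NSubA_succ] at hy ⊢
  intro i hi hi'
  rcases lt_or_ge i l with h | h
  · obtain ⟨m, rfl⟩ : ∃ m', m = m' + 1 := ⟨m - 1, by omega⟩
    rw [hdc_lt m i l true hi h (by omega), hy i hi (by omega), map_zero]
  · rcases eq_or_lt_of_le h with h | h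
    · subst h
      rw [(hdc_eq_one m l hl hl' y).1, hy l hl hl', map_zero]
    · rcases eq_or_lt_of_le (Nat.succ_le_of_lt h) with h | h
      · subst h
        rw [(hdc_eq_one m l hl hl' y).2, hy l hl hl', map_zero]
      · obtain ⟨m, rfl⟩ : ∃ m', m = m' + 1 := ⟨m - 1, by omega⟩
        rw [hdc_gt m i l true hl h (by omega), hy (i - 1) (by omega) (by omega), map_zero]

/-- Faces `∂^0` preserve `N`. -/
theorem face_mem {G : ℕ → Type u} [∀ n, AddCommGroup (G n)]
    {d : ∀ n : ℕ, ℕ → Bool → (G (n + 1) →+ G n)}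
    (hdd : ∀ (n i j : ℕ) (α ε : Bool), 1 ≤ i → i < j → j ≤ n + 2 →
      ∀ x, d n i α (d (n + 1) j ε x) = d n (j - 1) ε (d (n + 1) i α x))
    (m k : ℕ) (hk : 1 ≤ k) (hk' : k ≤ m + 2) (w : G (m + 2)) (hw : w ∈ NSubA G d (m + 2)) :
    d (m + 1) k false w ∈ NSubA G d (m + 1) := by
  rw [mem_NSubA_succ] at hw ⊢
  intro i hi hi'
  rcases lt_or_ge i k with h | h
  · rw [hdd m i k true false hi h hk', hw i hi (by omega), map_zero]
  · have := hdd m k (i + 1) false true hk (by omega) (by omega) w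
    rw [Nat.add_sub_cancel] at this
    rw [← this, hw (i + 1) (by omega) (by omega), map_zero]

/-- The fundamental homotopy identity. -/
theorem delta_conn {G : ℕ → Type u} [∀ n, AddCommGroup (G n)]
    {d : ∀ n : ℕ, ℕ → Bool → (G (n + 1) →+ G n)}
    {Γ : ∀ n : ℕ, ℕ → (G (n + 1) →+ G (n + 2))}
    (hdc_lt : ∀ (n i j : ℕ) (α : Bool), 1 ≤ i → i < j → j ≤ n + 2 →
      ∀ x, d (n + 2) i α (Γ (n + 1) j x) = Γ n (j - 1) (d (n + 1) i α x))
    (hdc_eq_zero : ∀ (n j : ℕ), 1 ≤ j → j ≤ n + 1 →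
      ∀ x, d (n + 1) j false (Γ n j x) = x ∧ d (n + 1) (j + 1) false (Γ n j x) = x)
    (hdc_gt : ∀ (n i j : ℕ) (α : Bool), 1 ≤ j → j + 1 < i → i ≤ n + 3 →
      ∀ x, d (n + 2) i α (Γ (n + 1) j x) = Γ n j (d (n + 1) (i - 1) α x))
    (m l : ℕ) (hl : 1 ≤ l) (hl' : l ≤ m + 1) (z : G (m + 2))
    (hz : ∀ i, l + 1 < i → i ≤ m + 2 → d (m + 1) i false z = 0) :
    Γ m l (d (m + 1) (l + 1) false z) =
      ((-1 : ℤ) ^ l) • (Γ m l (deltaA G d (m + 1) z) - deltaA G d (m + 2) (Γ (m + 1) (l + 1) z)) := by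
  have h1 : deltaA G d (m + 2) (Γ (m + 1) (l + 1) z) =
      ∑ i ∈ Finset.Icc 1 l, ((-1 : ℤ) ^ (i + 1)) • Γ m l (d (m + 1) i false z) := by
    rw [deltaA_trunc (m + 2) (l + 2) (by omega)]
    · rw [Finset.sum_Icc_succ_top (by omega), Finset.sum_Icc_succ_top (by omega),
        (hdc_eq_zero (m + 1) (l + 1) (by omega) (by omega) z).1,
        (hdc_eq_zero (m + 1) (l + 1) (by omega) (by omega) z).2, add_assoc, ← add_smul]
      have : (-1 : ℤ) ^ (l + 1 + 1) + (-1) ^ (l + 1 + 1 + 1) = 0 := by ring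
      rw [this, zero_smul, add_zero]
      refine Finset.sum_congr rfl fun i hi => ?_
      rw [Finset.mem_Icc] at hi
      rw [hdc_lt m i (l + 1) false (by omega) (by omega) (by omega), Nat.add_sub_cancel]
    · intro i hi hi'
      rw [hdc_gt m i (l + 1) false (by omega) (by omega) (by omega), hz (i - 1) (by omega) (by omega),
        map_zero]
  rw [h1, deltaA_trunc (m + 1) (l + 1) (by omega) z hz, Finset.sum_Icc_succ_top (by omega), map_add,
    map_sum, map_zsmul]
  simp only [map_zsmul]
  rw [add_sub_cancel_left, smul_smul]
  have : (-1 : ℤ) ^ l * (-1) ^ (l + 1 + 1) = 1 := by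
    rw [← pow_add]
    exact Even.neg_one_pow ⟨l + 1, by ring⟩
  rw [this, one_smul]

/-- One step of the normalization: the next face is killed. -/
theorem step_face {G : ℕ → Type u} [∀ n, AddCommGroup (G n)]
    {d : ∀ n : ℕ, ℕ → Bool → (G (n + 1) →+ G n)}
    {Γ : ∀ n : ℕ, ℕ → (G (n + 1) →+ G (n + 2))}
    (hdd : ∀ (n i j : ℕ) (α ε : Bool), 1 ≤ i → i < j → j ≤ n + 2 →
      ∀ x, d n i α (d (n + 1) j ε x) = d n (j - 1) ε (d (n + 1) i α x))
    (hdc_eq_zero : ∀ (n j : ℕ), 1 ≤ j → j ≤ n + 1 →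
      ∀ x, d (n + 1) j false (Γ n j x) = x ∧ d (n + 1) (j + 1) false (Γ n j x) = x)
    (hdc_gt : ∀ (n i j : ℕ) (α : Bool), 1 ≤ j → j + 1 < i → i ≤ n + 3 →
      ∀ x, d (n + 2) i α (Γ (n + 1) j x) = Γ n j (d (n + 1) (i - 1) α x))
    (m l : ℕ) (hl : 1 ≤ l) (hl' : l ≤ m + 1) (z : G (m + 2))
    (hz : ∀ i, l + 1 < i → i ≤ m + 2 → d (m + 1) i false z = 0) :
    ∀ i, l < i → i ≤ m + 2 →
      d (m + 1) i false (z - Γ m l (d (m + 1) (l + 1) false z)) = 0 := by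
  intro i hi hi'
  rw [map_sub]
  rcases eq_or_lt_of_le (Nat.succ_le_of_lt hi) with h | h
  · subst h
    rw [(hdc_eq_zero m l hl hl' _).2, Nat.succ_eq_add_one, sub_self]
  · obtain ⟨m, rfl⟩ : ∃ m', m = m' + 1 := ⟨m - 1, by omega⟩
    rw [hdc_gt m i l false hl h (by omega), hz i h hi',
      ← hdd (m + 1) (l + 1) i false false (by omega) h hi', hz i h hi']
    simp

/-- Every cycle is homologous to a cycle with vanishing higher faces. -/
theorem cycle_norm {G : ℕ → Type u} [∀ n, AddCommGroup (G n)]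
    {d : ∀ n : ℕ, ℕ → Bool → (G (n + 1) →+ G n)}
    {s : ∀ n : ℕ, ℕ → (G n →+ G (n + 1))}
    {Γ : ∀ n : ℕ, ℕ → (G (n + 1) →+ G (n + 2))}
    (hdd : ∀ (n i j : ℕ) (α ε : Bool), 1 ≤ i → i < j → j ≤ n + 2 →
      ∀ x, d n i α (d (n + 1) j ε x) = d n (j - 1) ε (d (n + 1) i α x))
    (hdc_lt : ∀ (n i j : ℕ) (α : Bool), 1 ≤ i → i < j → j ≤ n + 2 →
      ∀ x, d (n + 2) i α (Γ (n + 1) j x) = Γ n (j - 1) (d (n + 1) i α x))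
    (hdc_eq_zero : ∀ (n j : ℕ), 1 ≤ j → j ≤ n + 1 →
      ∀ x, d (n + 1) j false (Γ n j x) = x ∧ d (n + 1) (j + 1) false (Γ n j x) = x)
    (hdc_eq_one : ∀ (n j : ℕ), 1 ≤ j → j ≤ n + 1 →
      ∀ x, d (n + 1) j true (Γ n j x) = s n j (d n j true x) ∧
        d (n + 1) (j + 1) true (Γ n j x) = s n j (d n j true x))
    (hdc_gt : ∀ (n i j : ℕ) (α : Bool), 1 ≤ j → j + 1 < i → i ≤ n + 3 →
      ∀ x, d (n + 2) i α (Γ (n + 1) j x) = Γ n j (d (n + 1) (i - 1) α x))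
    (n k : ℕ) : k ≤ n → ∀ z : G (n + 1), z ∈ NSubA G d (n + 1) → deltaA G d n z = 0 →
      (∀ i, k + 1 < i → i ≤ n + 1 → d n i false z = 0) →
      ∃ t : G (n + 1), t ∈ NSubA G d (n + 1) ∧ deltaA G d n t = 0 ∧
        (∀ i, 1 < i → i ≤ n + 1 → d n i false t = 0) ∧ z - t ∈ BSubA G d (n + 1) := by
  induction k with
  | zero =>
    intro _ z hz hd hf
    exact ⟨z, hz, hd, fun i hi hi' => hf i (by omega) hi', by simp⟩
  | succ k ih =>
    intro hk z hz hd hf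
    obtain ⟨m, rfl⟩ : ∃ m', n = m' + 1 := ⟨n - 1, by omega⟩
    have key := delta_conn hdc_lt hdc_eq_zero hdc_gt m (k + 1) (by omega) (by omega) z hf
    rw [hd, map_zero, zero_sub] at key
    have hb : Γ m (k + 1) (d (m + 1) (k + 1 + 1) false z) ∈ BSubA G d (m + 2) := by
      rw [key]
      apply AddSubgroup.zsmul_mem
      apply AddSubgroup.neg_mem
      exact ⟨_, conn_mem hdc_lt hdc_eq_zero hdc_eq_one hdc_gt (m + 1) (k + 1 + 1) (by omega) (by omega) z hz, rfl⟩
    obtain ⟨t, ht, htd, htf, htb⟩ := ih (by omega)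
      (z - Γ m (k + 1) (d (m + 1) (k + 1 + 1) false z))
      (AddSubgroup.sub_mem _ hz (conn_mem hdc_lt hdc_eq_zero hdc_eq_one hdc_gt m (k + 1) (by omega) (by omega) _
        (face_mem hdd m (k + 1 + 1) (by omega) (by omega) z hz)))
      (by rw [map_sub, hd, key, map_zsmul, map_neg, deltaA_deltaA hdd]; simp)
      (step_face hdd hdc_eq_zero hdc_gt m (k + 1) (by omega) (by omega) z hf)
    refine ⟨t, ht, htd, htf, ?_⟩
    have := AddSubgroup.add_mem _ htb hb
    convert this using 1
    abel

/-- A boundary with vanishing faces is the boundary of a chain with vanishing higher faces. -/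
theorem bound_norm {G : ℕ → Type u} [∀ n, AddCommGroup (G n)]
    {d : ∀ n : ℕ, ℕ → Bool → (G (n + 1) →+ G n)}
    {s : ∀ n : ℕ, ℕ → (G n →+ G (n + 1))}
    {Γ : ∀ n : ℕ, ℕ → (G (n + 1) →+ G (n + 2))}
    (hdd : ∀ (n i j : ℕ) (α ε : Bool), 1 ≤ i → i < j → j ≤ n + 2 →
      ∀ x, d n i α (d (n + 1) j ε x) = d n (j - 1) ε (d (n + 1) i α x))
    (hdc_lt : ∀ (n i j : ℕ) (α : Bool), 1 ≤ i → i < j → j ≤ n + 2 →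
      ∀ x, d (n + 2) i α (Γ (n + 1) j x) = Γ n (j - 1) (d (n + 1) i α x))
    (hdc_eq_zero : ∀ (n j : ℕ), 1 ≤ j → j ≤ n + 1 →
      ∀ x, d (n + 1) j false (Γ n j x) = x ∧ d (n + 1) (j + 1) false (Γ n j x) = x)
    (hdc_eq_one : ∀ (n j : ℕ), 1 ≤ j → j ≤ n + 1 →
      ∀ x, d (n + 1) j true (Γ n j x) = s n j (d n j true x) ∧
        d (n + 1) (j + 1) true (Γ n j x) = s n j (d n j true x))
    (hdc_gt : ∀ (n i j : ℕ) (α : Bool), 1 ≤ j → j + 1 < i → i ≤ n + 3 →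
      ∀ x, d (n + 2) i α (Γ (n + 1) j x) = Γ n j (d (n + 1) (i - 1) α x))
    (n k : ℕ) (x : G n) (hx : x ∈ TildeA G d n) :
    k ≤ n → ∀ w : G (n + 1), w ∈ NSubA G d (n + 1) → deltaA G d n w = x →
      (∀ i, k + 1 < i → i ≤ n + 1 → d n i false w = 0) →
      ∃ t : G (n + 1), t ∈ NSubA G d (n + 1) ∧ deltaA G d n t = x ∧
        (∀ i, 1 < i → i ≤ n + 1 → d n i false t = 0) := by
  induction k with
  | zero =>
    intro _ z hz hd hf
    exact ⟨z, hz, hd, fun i hi hi' => hf i (by omega) hi'⟩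
  | succ k ih =>
    intro hk w hw hd hf
    obtain ⟨m, rfl⟩ : ∃ m', n = m' + 1 := ⟨n - 1, by omega⟩
    have key := delta_conn hdc_lt hdc_eq_zero hdc_gt m (k + 1) (by omega) (by omega) w hf
    rw [mem_TildeA_succ] at hx
    have hGx : deltaA G d (m + 1) (Γ m (k + 1) x) = 0 := by
      rw [deltaA_trunc (m + 1) (k + 1 + 1) (by omega)]
      · rw [Finset.sum_Icc_succ_top (by omega), Finset.sum_Icc_succ_top (by omega),
          (hdc_eq_zero m (k + 1) (by omega) (by omega) x).1,
          (hdc_eq_zero m (k + 1) (by omega) (by omega) x).2, add_assoc, ← add_smul]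
        have : (-1 : ℤ) ^ (k + 1 + 1) + (-1) ^ (k + 1 + 1 + 1) = 0 := by ring
        rw [this, zero_smul, add_zero]
        refine Finset.sum_eq_zero fun i hi => ?_
        rw [Finset.mem_Icc] at hi
        obtain ⟨m, rfl⟩ : ∃ m', m = m' + 1 := ⟨m - 1, by omega⟩
        rw [hdc_lt m i (k + 1) false (by omega) (by omega) (by omega),
          hx i (by omega) (by omega), map_zero, smul_zero]
      · intro i hi hi'
        obtain ⟨m, rfl⟩ : ∃ m', m = m' + 1 := ⟨m - 1, by omega⟩
        rw [hdc_gt m i (k + 1) false (by omega) (by omega) (by omega),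
          hx (i - 1) (by omega) (by omega), map_zero]
    exact ih (by omega)
      (w - Γ m (k + 1) (d (m + 1) (k + 1 + 1) false w))
      (AddSubgroup.sub_mem _ hw (conn_mem hdc_lt hdc_eq_zero hdc_eq_one hdc_gt m (k + 1) (by omega) (by omega) _
        (face_mem hdd m (k + 1 + 1) (by omega) (by omega) w hw)))
      (by rw [map_sub, hd, key, map_zsmul, map_sub, deltaA_deltaA hdd, hd, hGx]; simp)
      (step_face hdd hdc_eq_zero hdc_gt m (k + 1) (by omega) (by omega) w hf)

theorem tilde_le {G : ℕ → Type u} [∀ n, AddCommGroup (G n)]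
    {d : ∀ n : ℕ, ℕ → Bool → (G (n + 1) →+ G n)} (n : ℕ) : TildeA G d n ≤ ZSubA G d n := by
  intro x hx
  cases n with
  | zero => trivial
  | succ n =>
    rw [mem_TildeA_succ] at hx
    refine ⟨mem_NSubA_succ.2 fun i hi hi' => hx i hi hi' _, ?_⟩
    show deltaA G d n x = 0
    rw [deltaA_one n x fun i hi hi' => hx i (by omega) hi' _, hx 1 le_rfl (by omega)]

theorem face_s_tilde {G : ℕ → Type u} [∀ n, AddCommGroup (G n)]
    {d : ∀ n : ℕ, ℕ → Bool → (G (n + 1) →+ G n)}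
    {s : ∀ n : ℕ, ℕ → (G n →+ G (n + 1))}
    (hds_gt : ∀ (n i j : ℕ) (α : Bool), 1 ≤ j → j < i → i ≤ n + 2 →
      ∀ x, d (n + 1) i α (s (n + 1) j x) = s n j (d n (i - 1) α x))
    (n : ℕ) (y : G n) (hy : y ∈ TildeA G d n) (j : ℕ) (ε : Bool) (hj : 2 ≤ j) (hj' : j ≤ n + 1) :
    d n j ε (s n 1 y) = 0 := by
  obtain ⟨m, rfl⟩ : ∃ m', n = m' + 1 := ⟨n - 1, by omega⟩
  rw [mem_TildeA_succ] at hy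
  rw [hds_gt m j 1 ε le_rfl (by omega) (by omega), hy (j - 1) (by omega) (by omega), map_zero]

theorem rel_iff {G : ℕ → Type u} [∀ n, AddCommGroup (G n)]
    {d : ∀ n : ℕ, ℕ → Bool → (G (n + 1) →+ G n)}
    {s : ∀ n : ℕ, ℕ → (G n →+ G (n + 1))}
    {Γ : ∀ n : ℕ, ℕ → (G (n + 1) →+ G (n + 2))}
    (hdd : ∀ (n i j : ℕ) (α ε : Bool), 1 ≤ i → i < j → j ≤ n + 2 →
      ∀ x, d n i α (d (n + 1) j ε x) = d n (j - 1) ε (d (n + 1) i α x))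
    (hds_eq : ∀ (n i : ℕ) (α : Bool), 1 ≤ i → i ≤ n + 1 → ∀ x, d n i α (s n i x) = x)
    (hds_gt : ∀ (n i j : ℕ) (α : Bool), 1 ≤ j → j < i → i ≤ n + 2 →
      ∀ x, d (n + 1) i α (s (n + 1) j x) = s n j (d n (i - 1) α x))
    (hdc_lt : ∀ (n i j : ℕ) (α : Bool), 1 ≤ i → i < j → j ≤ n + 2 →
      ∀ x, d (n + 2) i α (Γ (n + 1) j x) = Γ n (j - 1) (d (n + 1) i α x))
    (hdc_eq_zero : ∀ (n j : ℕ), 1 ≤ j → j ≤ n + 1 →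
      ∀ x, d (n + 1) j false (Γ n j x) = x ∧ d (n + 1) (j + 1) false (Γ n j x) = x)
    (hdc_eq_one : ∀ (n j : ℕ), 1 ≤ j → j ≤ n + 1 →
      ∀ x, d (n + 1) j true (Γ n j x) = s n j (d n j true x) ∧
        d (n + 1) (j + 1) true (Γ n j x) = s n j (d n j true x))
    (hdc_gt : ∀ (n i j : ℕ) (α : Bool), 1 ≤ j → j + 1 < i → i ≤ n + 3 →
      ∀ x, d (n + 2) i α (Γ (n + 1) j x) = Γ n j (d (n + 1) (i - 1) α x))
    (n : ℕ) (x y : G n) (hx : x ∈ TildeA G d n) (hy : y ∈ TildeA G d n) :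
    RelA G d n x y ↔ x - y ∈ BSubA G d n := by
  have hs := face_s_tilde hds_gt n y hy
  constructor
  · rintro ⟨z, h0, h1, hz⟩
    refine ⟨z - s n 1 y, mem_NSubA_succ.2 fun i hi hi' => ?_, ?_⟩
    · rw [map_sub]
      rcases eq_or_lt_of_le hi with h | h
      · subst h
        rw [h1, hds_eq n 1 true le_rfl (by omega), sub_self]
      · rw [hz i true h hi', hs i true h hi', sub_self]
    · rw [deltaA_one, map_sub, h0, hds_eq n 1 false le_rfl (by omega)]
      intro i hi hi'
      rw [map_sub, hz i false hi hi', hs i false hi hi', sub_self]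
  · rintro ⟨w, hw, hd⟩
    obtain ⟨t, ht, htd, htf⟩ := bound_norm hdd hdc_lt hdc_eq_zero hdc_eq_one hdc_gt n n (x - y)
      (AddSubgroup.sub_mem _ hx hy) le_rfl w hw hd (fun i hi hi' => by omega)
    rw [deltaA_one n t htf] at htd
    rw [mem_NSubA_succ] at ht
    refine ⟨t + s n 1 y, ?_, ?_, ?_⟩
    · rw [map_add, htd, hds_eq n 1 false le_rfl (by omega), sub_add_cancel]
    · rw [map_add, ht 1 le_rfl (by omega), hds_eq n 1 true le_rfl (by omega), zero_add]
    · intro j ε hj hj'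
      rw [map_add, hs j ε hj hj', add_zero]
      cases ε
      · exact htf j hj hj'
      · exact ht j (by omega) hj'

theorem exists_tilde {G : ℕ → Type u} [∀ n, AddCommGroup (G n)]
    {d : ∀ n : ℕ, ℕ → Bool → (G (n + 1) →+ G n)}
    {s : ∀ n : ℕ, ℕ → (G n →+ G (n + 1))}
    {Γ : ∀ n : ℕ, ℕ → (G (n + 1) →+ G (n + 2))}
    (hdd : ∀ (n i j : ℕ) (α ε : Bool), 1 ≤ i → i < j → j ≤ n + 2 →
      ∀ x, d n i α (d (n + 1) j ε x) = d n (j - 1) ε (d (n + 1) i α x))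
    (hdc_lt : ∀ (n i j : ℕ) (α : Bool), 1 ≤ i → i < j → j ≤ n + 2 →
      ∀ x, d (n + 2) i α (Γ (n + 1) j x) = Γ n (j - 1) (d (n + 1) i α x))
    (hdc_eq_zero : ∀ (n j : ℕ), 1 ≤ j → j ≤ n + 1 →
      ∀ x, d (n + 1) j false (Γ n j x) = x ∧ d (n + 1) (j + 1) false (Γ n j x) = x)
    (hdc_eq_one : ∀ (n j : ℕ), 1 ≤ j → j ≤ n + 1 →
      ∀ x, d (n + 1) j true (Γ n j x) = s n j (d n j true x) ∧
        d (n + 1) (j + 1) true (Γ n j x) = s n j (d n j true x))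
    (hdc_gt : ∀ (n i j : ℕ) (α : Bool), 1 ≤ j → j + 1 < i → i ≤ n + 3 →
      ∀ x, d (n + 2) i α (Γ (n + 1) j x) = Γ n j (d (n + 1) (i - 1) α x))
    (n : ℕ) (z : G n) (hz : z ∈ ZSubA G d n) :
    ∃ t ∈ TildeA G d n, z - t ∈ BSubA G d n := by
  cases n with
  | zero => exact ⟨z, trivial, by simp⟩
  | succ n =>
    obtain ⟨hN, hd⟩ := hz
    obtain ⟨t, ht, htd, htf, htb⟩ := cycle_norm hdd hdc_lt hdc_eq_zero hdc_eq_one hdc_gt n n le_rfl z hN hd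
      (fun i hi hi' => by omega)
    refine ⟨t, mem_TildeA_succ.2 fun i hi hi' ε => ?_, htb⟩
    cases ε
    · rcases eq_or_lt_of_le hi with h | h
      · subst h
        rw [← htd, deltaA_one n t htf]
      · exact htf i h hi'
    · exact mem_NSubA_succ.1 ht i hi hi'

theorem stmt7 (G : ℕ → Type u) [∀ n, AddCommGroup (G n)]
    (d : ∀ n : ℕ, ℕ → Bool → (G (n + 1) →+ G n))
    (s : ∀ n : ℕ, ℕ → (G n →+ G (n + 1)))
    (Γ : ∀ n : ℕ, ℕ → (G (n + 1) →+ G (n + 2)))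
    (hdd : ∀ (n i j : ℕ) (α ε : Bool), 1 ≤ i → i < j → j ≤ n + 2 →
      ∀ x, d n i α (d (n + 1) j ε x) = d n (j - 1) ε (d (n + 1) i α x))
    (hss : ∀ (n i j : ℕ), 1 ≤ i → i ≤ j → j ≤ n + 1 →
      ∀ x, s (n + 1) i (s n j x) = s (n + 1) (j + 1) (s n i x))
    (hds_lt : ∀ (n i j : ℕ) (α : Bool), 1 ≤ i → i < j → j ≤ n + 2 →
      ∀ x, d (n + 1) i α (s (n + 1) j x) = s n (j - 1) (d n i α x))
    (hds_eq : ∀ (n i : ℕ) (α : Bool), 1 ≤ i → i ≤ n + 1 → ∀ x, d n i α (s n i x) = x)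
    (hds_gt : ∀ (n i j : ℕ) (α : Bool), 1 ≤ j → j < i → i ≤ n + 2 →
      ∀ x, d (n + 1) i α (s (n + 1) j x) = s n j (d n (i - 1) α x))
    (hcc : ∀ (n i j : ℕ), 1 ≤ i → i ≤ j → j ≤ n + 1 →
      ∀ x, Γ (n + 1) i (Γ n j x) = Γ (n + 1) (j + 1) (Γ n i x))
    (hcs_lt : ∀ (n i j : ℕ), 1 ≤ i → i < j → j ≤ n + 2 →
      ∀ x, Γ (n + 1) i (s (n + 1) j x) = s (n + 2) (j + 1) (Γ n i x))
    (hcs_eq : ∀ (n i : ℕ), 1 ≤ i → i ≤ n + 2 →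
      ∀ x, Γ (n + 1) i (s (n + 1) i x) = s (n + 2) i (s (n + 1) i x))
    (hcs_gt : ∀ (n i j : ℕ), 1 ≤ j → j < i → i ≤ n + 2 →
      ∀ x, Γ (n + 1) i (s (n + 1) j x) = s (n + 2) j (Γ n (i - 1) x))
    (hdc_lt : ∀ (n i j : ℕ) (α : Bool), 1 ≤ i → i < j → j ≤ n + 2 →
      ∀ x, d (n + 2) i α (Γ (n + 1) j x) = Γ n (j - 1) (d (n + 1) i α x))
    (hdc_eq_zero : ∀ (n j : ℕ), 1 ≤ j → j ≤ n + 1 →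
      ∀ x, d (n + 1) j false (Γ n j x) = x ∧ d (n + 1) (j + 1) false (Γ n j x) = x)
    (hdc_eq_one : ∀ (n j : ℕ), 1 ≤ j → j ≤ n + 1 →
      ∀ x, d (n + 1) j true (Γ n j x) = s n j (d n j true x) ∧
        d (n + 1) (j + 1) true (Γ n j x) = s n j (d n j true x))
    (hdc_gt : ∀ (n i j : ℕ) (α : Bool), 1 ≤ j → j + 1 < i → i ≤ n + 3 →
      ∀ x, d (n + 2) i α (Γ (n + 1) j x) = Γ n j (d (n + 1) (i - 1) α x)) :
    ∀ n : ℕ, ∃ e : Quot (fun a b : ↥(TildeA G d n) => RelA G d n ↑a ↑b) ≃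
        (↥(ZSubA G d n) ⧸ (BSubA G d n).addSubgroupOf (ZSubA G d n)),
      ∀ a b : ↥(TildeA G d n),
        e (Quot.mk _ (a + b)) = e (Quot.mk _ a) + e (Quot.mk _ b) := by
  intro n
  have hrel := rel_iff hdd hds_eq hds_gt hdc_lt hdc_eq_zero hdc_eq_one hdc_gt n
  have hex := exists_tilde hdd hdc_lt hdc_eq_zero hdc_eq_one hdc_gt n
  let φ : ↥(TildeA G d n) →+ (↥(ZSubA G d n) ⧸ (BSubA G d n).addSubgroupOf (ZSubA G d n)) :=
    (QuotientAddGroup.mk' _).comp (AddSubgroup.inclusion (tilde_le n))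
  have hφ : ∀ a b : ↥(TildeA G d n), φ a = φ b ↔ RelA G d n ↑a ↑b := by
    intro a b
    rw [hrel a b a.2 b.2, ← sub_eq_zero, ← map_sub]
    change ((AddSubgroup.inclusion (tilde_le n) (a - b) : ↥(ZSubA G d n)) :
      ↥(ZSubA G d n) ⧸ (BSubA G d n).addSubgroupOf (ZSubA G d n)) = 0 ↔ _
    rw [QuotientAddGroup.eq_zero_iff, AddSubgroup.mem_addSubgroupOf]
    rfl
  refine ⟨Equiv.ofBijective (Quot.lift φ fun a b h => (hφ a b).2 h) ⟨?_, ?_⟩, fun a b => ?_⟩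
  · rintro ⟨a⟩ ⟨b⟩ h
    exact Quot.sound ((hφ a b).1 h)
  · intro q
    obtain ⟨z, rfl⟩ := QuotientAddGroup.mk_surjective q
    obtain ⟨t, ht, hb⟩ := hex z z.2
    refine ⟨Quot.mk _ ⟨t, ht⟩, ?_⟩
    change ((AddSubgroup.inclusion (tilde_le n) ⟨t, ht⟩ : ↥(ZSubA G d n)) :
      ↥(ZSubA G d n) ⧸ (BSubA G d n).addSubgroupOf (ZSubA G d n)) = _
    rw [QuotientAddGroup.eq, AddSubgroup.mem_addSubgroupOf]
    change -t + (z : G n) ∈ _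
    rwa [neg_add_eq_sub]
  · exact map_add φ a b
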